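/- arXiv:2004.10893 — 3 statements merged into one kernel-verified Lean document; each statement's English description precedes it below -/
import Mathlib

section
/- If finite simple graphs G and H satisfy G ≅_{S+} H, then G is walk-regular if and only if H is walk-regular, and G is 1-walk-regular if and only if H is 1-walk-regular. -/
open Matrix BigOperators

/-- `rel(g,g') = rel(h,h')`. -/
def relEq {α β : Type*} (G : SimpleGraph α) (H : SimpleGraph β)
    (g g' : α) (h h' : β) : Prop :=
  (g = g' ↔ h = h') ∧ (G.Adj g g' ↔ H.Adj h h')

/-- `M` satisfies the linear constraints of an isomorphism matrix for `G` to `H`. -/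
def IsIsoMatrix {α β : Type*} [Fintype α] [Fintype β]
    (G : SimpleGraph α) (H : SimpleGraph β)
    (M : Matrix (α × β) (α × β) ℝ) : Prop :=
  (∀ g g' : α, ∑ h : β, ∑ h' : β, M (g, h) (g', h') = 1) ∧
  (∀ h h' : β, ∑ g : α, ∑ g' : α, M (g, h) (g', h') = 1) ∧
  (∀ g g' h h', ¬ relEq G H g g' h h' → M (g, h) (g', h') = 0)

/-- `G` is walk-regular: `I ∘ A^ℓ = a_ℓ I` for some number `a_ℓ`, for every `ℓ`. -/
def WalkRegular {V : Type*} [Fintype V] [DecidableEq V]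
    (G : SimpleGraph V) [DecidableRel G.Adj] : Prop :=
  ∀ ℓ : ℕ, ∃ a : ℝ,
    Matrix.hadamard (1 : Matrix V V ℝ) ((G.adjMatrix ℝ) ^ ℓ) = a • (1 : Matrix V V ℝ)

/-- `G` is 1-walk-regular: it is walk-regular and `A ∘ A^ℓ = b_ℓ A` for some `b_ℓ`. -/
def OneWalkRegular {V : Type*} [Fintype V] [DecidableEq V]
    (G : SimpleGraph V) [DecidableRel G.Adj] : Prop :=
  WalkRegular G ∧
  ∀ ℓ : ℕ, ∃ b : ℝ,
    Matrix.hadamard (G.adjMatrix ℝ) ((G.adjMatrix ℝ) ^ ℓ) = b • G.adjMatrix ℝ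

open scoped Kronecker MatrixOrder Matrix.Norms.L2Operator

/-- The linear map on matrices attached to `M`. -/
def isoPhi {α β : Type*} [Fintype α] (M : Matrix (α × β) (α × β) ℝ) (X : Matrix α α ℝ) :
    Matrix β β ℝ := fun h k => ∑ g, ∑ g', M (g, h) (g', k) * X g g'

/-- The transposed isomorphism matrix, for `H` to `G`. -/
def isoSwap {α β : Type*} (M : Matrix (α × β) (α × β) ℝ) : Matrix (β × α) (β × α) ℝ :=
  M.submatrix Prod.swap Prod.swap

lemma IsIsoMatrix.swap {α β : Type*} [Fintype α] [Fintype β]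
    {G : SimpleGraph α} {H : SimpleGraph β} {M : Matrix (α × β) (α × β) ℝ}
    (hM : IsIsoMatrix G H M) : IsIsoMatrix H G (isoSwap M) := by
  obtain ⟨h1, h2, h3⟩ := hM
  refine ⟨fun g g' => h2 g g', fun g g' => h1 g g', fun h h' g g' hr => h3 g g' h h' ?_⟩
  intro hr'
  exact hr ⟨hr'.1.symm, hr'.2.symm⟩

set_option linter.unusedSectionVars false

section
variable {α β : Type*} [Fintype α] [Fintype β] [DecidableEq α] [DecidableEq β]
    {G : SimpleGraph α} {H : SimpleGraph β} [DecidableRel G.Adj] [DecidableRel H.Adj]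
    {M : Matrix (α × β) (α × β) ℝ}

lemma isoPhi_one_hadamard (hM : IsIsoMatrix G H M) (X : Matrix α α ℝ) :
    isoPhi M (Matrix.hadamard 1 X) = Matrix.hadamard 1 (isoPhi M X) := by
  ext h k
  simp only [isoPhi, Matrix.hadamard_apply, Finset.mul_sum]
  refine Finset.sum_congr rfl fun g _ => Finset.sum_congr rfl fun g' _ => ?_
  by_cases hr : relEq G H g g' h k
  · simp only [Matrix.one_apply, hr.1]; ring
  · simp [hM.2.2 _ _ _ _ hr]

lemma isoPhi_adj_hadamard (hM : IsIsoMatrix G H M) (X : Matrix α α ℝ) :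
    isoPhi M (Matrix.hadamard (G.adjMatrix ℝ) X) =
      Matrix.hadamard (H.adjMatrix ℝ) (isoPhi M X) := by
  ext h k
  simp only [isoPhi, Matrix.hadamard_apply, Finset.mul_sum]
  refine Finset.sum_congr rfl fun g _ => Finset.sum_congr rfl fun g' _ => ?_
  by_cases hr : relEq G H g g' h k
  · simp only [SimpleGraph.adjMatrix_apply, hr.2]; ring
  · simp [hM.2.2 _ _ _ _ hr]

lemma isoPhi_ones (hM : IsIsoMatrix G H M) :
    isoPhi M (Matrix.of fun _ _ => 1) = Matrix.of fun _ _ => 1 := by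
  ext h k
  simpa [isoPhi] using hM.2.1 h k

lemma hadA {γ : Type*} (Y : Matrix γ γ ℝ) :
    Matrix.hadamard Y (Matrix.of fun _ _ => 1) = Y := by
  ext i j
  simp

lemma isoPhi_one (hM : IsIsoMatrix G H M) : isoPhi M 1 = 1 := by
  have := isoPhi_one_hadamard hM (Matrix.of fun _ _ => 1)
  rw [isoPhi_ones hM] at this
  rwa [hadA, hadA] at this

lemma isoPhi_adj (hM : IsIsoMatrix G H M) : isoPhi M (G.adjMatrix ℝ) = H.adjMatrix ℝ := by
  have := isoPhi_adj_hadamard hM (Matrix.of fun _ _ => 1)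
  rw [isoPhi_ones hM] at this
  rwa [hadA, hadA] at this

lemma isoPhi_smul (c : ℝ) (X : Matrix α α ℝ) : isoPhi M (c • X) = c • isoPhi M X := by
  ext h k
  simp only [isoPhi, Matrix.smul_apply, Finset.mul_sum, smul_eq_mul]
  refine Finset.sum_congr rfl fun g _ => Finset.sum_congr rfl fun g' _ => ?_
  ring

lemma trace_mul_kron (X : Matrix α α ℝ) (Y : Matrix β β ℝ) (hX : Xᵀ = X) :
    (M * (X ⊗ₖ Y)).trace = (isoPhi M X * Y).trace := by
  have hs : ∀ g g', X g' g = X g g' := fun g g' => congrFun (congrFun hX g) g'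
  simp only [Matrix.trace, Matrix.diag_apply, Matrix.mul_apply, isoPhi, Fintype.sum_prod_type,
    Matrix.kroneckerMap_apply, Finset.sum_mul]
  rw [Finset.sum_comm]
  refine Finset.sum_congr rfl fun h _ => ?_
  rw [Finset.sum_comm' (t' := Finset.univ) (s' := fun _ => Finset.univ) (by simp)]
  rw [Finset.sum_comm]
  conv_rhs => rw [Finset.sum_comm]
  refine Finset.sum_congr rfl fun g _ => ?_
  rw [Finset.sum_comm]
  refine Finset.sum_congr rfl fun k _ => Finset.sum_congr rfl fun g' _ => ?_
  rw [hs]; ring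

lemma trace_mul_kron' (X : Matrix α α ℝ) (Y : Matrix β β ℝ) (hY : Yᵀ = Y) :
    (M * (X ⊗ₖ Y)).trace = (isoPhi (isoSwap M) Y * X).trace := by
  rw [← trace_mul_kron _ _ hY]
  simp only [Matrix.trace, Matrix.diag_apply, Matrix.mul_apply]
  rw [← (Equiv.prodComm β α).sum_comp]
  refine Finset.sum_congr rfl fun p _ => ?_
  rw [← (Equiv.prodComm β α).sum_comp]
  refine Finset.sum_congr rfl fun q _ => ?_
  simp [isoSwap, Matrix.kroneckerMap_apply, mul_comm]

lemma intertwine (hM : IsIsoMatrix G H M) (hP : M.PosSemidef) :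
    (G.adjMatrix ℝ ⊗ₖ (1 : Matrix β β ℝ)) * M = ((1 : Matrix α α ℝ) ⊗ₖ H.adjMatrix ℝ) * M := by
  set A := G.adjMatrix ℝ with hA
  set B := H.adjMatrix ℝ with hB
  have hAt : Aᵀ = A := G.transpose_adjMatrix
  have hBt : Bᵀ = B := H.transpose_adjMatrix
  set D := A ⊗ₖ (1 : Matrix β β ℝ) - (1 : Matrix α α ℝ) ⊗ₖ B with hD
  have hDt : Dᴴ = D := by
    ext ⟨g, h⟩ ⟨g', h'⟩
    have h1 := congrFun (congrFun hAt g) g'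
    have h2 := congrFun (congrFun hBt h) h'
    simp only [Matrix.transpose_apply] at h1 h2
    simp [hD, Matrix.kroneckerMap_apply, h1, h2, Matrix.one_apply, eq_comm]
  have hDD : D * D = (A * A) ⊗ₖ 1 - (A ⊗ₖ B + A ⊗ₖ B) + 1 ⊗ₖ (B * B) := by
    simp only [hD, sub_mul, mul_sub, ← Matrix.mul_kronecker_mul, one_mul, mul_one]
    abel
  have e1 : (M * ((A * A) ⊗ₖ (1 : Matrix β β ℝ))).trace = (A * A).trace := by
    rw [trace_mul_kron' _ _ Matrix.transpose_one, isoPhi_one hM.swap, one_mul]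
  have e2 : (M * ((1 : Matrix α α ℝ) ⊗ₖ (B * B))).trace = (B * B).trace := by
    rw [trace_mul_kron _ _ Matrix.transpose_one, isoPhi_one hM, one_mul]
  have e3 : (M * (A ⊗ₖ B)).trace = (A * A).trace := by
    rw [trace_mul_kron' _ _ hBt, isoPhi_adj hM.swap]
  have e4 : (M * (A ⊗ₖ B)).trace = (B * B).trace := by
    rw [trace_mul_kron _ _ hAt, isoPhi_adj hM]
  have htr : (M * (D * D)).trace = 0 := by
    rw [hDD, mul_add, mul_sub, mul_add, Matrix.trace_add, Matrix.trace_sub, Matrix.trace_add,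
      e1, e2]
    linarith
  obtain ⟨C, hC⟩ := CStarAlgebra.nonneg_iff_eq_star_mul_self.mp hP.nonneg
  rw [Matrix.star_eq_conjTranspose] at hC
  have hz : C * D = 0 := by
    rw [← Matrix.trace_conjTranspose_mul_self_eq_zero_iff, Matrix.conjTranspose_mul, hDt, ← htr, hC,
      Matrix.mul_assoc, Matrix.trace_mul_comm]
    simp only [Matrix.mul_assoc]
  have hz' : D * Cᴴ = 0 := by
    rw [← hDt, ← Matrix.conjTranspose_mul, hz, Matrix.conjTranspose_zero]
  rw [← sub_eq_zero, ← sub_mul, ← hD, hC, ← Matrix.mul_assoc, hz', zero_mul]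

lemma isoPhi_adj_mul (hM : IsIsoMatrix G H M) (hP : M.PosSemidef) (X : Matrix α α ℝ) :
    isoPhi M (G.adjMatrix ℝ * X) = H.adjMatrix ℝ * isoPhi M X := by
  have key : ∀ g h g' k, ∑ a, G.adjMatrix ℝ a g * M (a, h) (g', k)
      = ∑ b, H.adjMatrix ℝ h b * M (g, b) (g', k) := by
    intro g h g' k
    have := congrFun (congrFun (intertwine hM hP) (g, h)) (g', k)
    simp only [Matrix.mul_apply, Fintype.sum_prod_type] at this
    conv_rhs at this => rw [Finset.sum_comm]
    simpa [Matrix.kroneckerMap_apply, Matrix.one_apply, SimpleGraph.adj_comm] using this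
  ext h k
  have l : isoPhi M (G.adjMatrix ℝ * X) h k
      = ∑ g, ∑ g', (∑ a, G.adjMatrix ℝ a g * M (a, h) (g', k)) * X g g' := by
    simp only [isoPhi, Matrix.mul_apply, Finset.mul_sum, Finset.sum_mul]
    rw [Finset.sum_comm]
    conv_rhs => rw [Finset.sum_comm]
    refine Finset.sum_congr rfl fun g' _ => ?_
    rw [Finset.sum_comm]
    refine Finset.sum_congr rfl fun g _ => Finset.sum_congr rfl fun a _ => ?_
    ring
  rw [l]
  simp only [key]
  simp only [isoPhi, Matrix.mul_apply, Finset.mul_sum, Finset.sum_mul]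
  conv_rhs => rw [Finset.sum_comm]
  refine Finset.sum_congr rfl fun g _ => ?_
  rw [Finset.sum_comm]
  refine Finset.sum_congr rfl fun b _ => Finset.sum_congr rfl fun g' _ => ?_
  ring

lemma isoPhi_pow (hM : IsIsoMatrix G H M) (hP : M.PosSemidef) (n : ℕ) :
    isoPhi M (G.adjMatrix ℝ ^ n) = H.adjMatrix ℝ ^ n := by
  induction n with
  | zero => simpa using isoPhi_one hM
  | succ n ih => rw [pow_succ', pow_succ', isoPhi_adj_mul hM hP, ih]

lemma walkRegular_fwd (hM : IsIsoMatrix G H M) (hP : M.PosSemidef) (hG : WalkRegular G) :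
    WalkRegular H := by
  intro n
  obtain ⟨a, ha⟩ := hG n
  refine ⟨a, ?_⟩
  rw [← isoPhi_pow hM hP, ← isoPhi_one_hadamard hM, ha, isoPhi_smul, isoPhi_one hM]

lemma oneWalkRegular_fwd (hM : IsIsoMatrix G H M) (hP : M.PosSemidef) (hG : OneWalkRegular G) :
    OneWalkRegular H := by
  refine ⟨walkRegular_fwd hM hP hG.1, fun n => ?_⟩
  obtain ⟨b, hb⟩ := hG.2 n
  refine ⟨b, ?_⟩
  rw [← isoPhi_pow hM hP, ← isoPhi_adj_hadamard hM, hb, isoPhi_smul, isoPhi_adj hM]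

end

/-- If `G ≅_{S+} H` then `G` is (1-)walk-regular iff `H` is (1-)walk-regular. -/
theorem walkRegular_iff_of_sPlus_iso {α β : Type*}
    [Fintype α] [Fintype β] [DecidableEq α] [DecidableEq β]
    (G : SimpleGraph α) (H : SimpleGraph β)
    [DecidableRel G.Adj] [DecidableRel H.Adj]
    (h : ∃ M, IsIsoMatrix G H M ∧ M.PosSemidef) :
    (WalkRegular G ↔ WalkRegular H) ∧ (OneWalkRegular G ↔ OneWalkRegular H) := by
  obtain ⟨M, hM, hP⟩ := h
  have hP' : (isoSwap M).PosSemidef := hP.submatrix _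
  exact ⟨⟨walkRegular_fwd hM hP, walkRegular_fwd hM.swap hP'⟩,
    ⟨oneWalkRegular_fwd hM hP, oneWalkRegular_fwd hM.swap hP'⟩⟩
end

section
/- If G is a connected 1-walk-regular finite simple graph, then the partially coherent algebra of G is equal to the adjacency algebra of G, i.e., the algebra of all polynomials (with complex coefficients) in the adjacency matrix A_G. -/
open Matrix BigOperators

/-- The all-ones matrix. -/
def allOnes (V : Type*) : Matrix V V ℂ := Matrix.of fun _ _ => 1

/-- A subspace `S` of `ℂ^{V×V}` is a partially coherent algebra (with respect to
`{I, A}`) if it contains `I`, `A` and `J`, is closed under matrix multiplication and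
conjugate transposition, and is closed under Schur product with `I` and with `A`. -/
def IsPartiallyCoherent {V : Type*} [Fintype V] [DecidableEq V]
    (A : Matrix V V ℂ) (S : Submodule ℂ (Matrix V V ℂ)) : Prop :=
  (1 : Matrix V V ℂ) ∈ S ∧ A ∈ S ∧ allOnes V ∈ S ∧
  (∀ X ∈ S, ∀ Y ∈ S, X * Y ∈ S) ∧
  (∀ X ∈ S, Xᴴ ∈ S) ∧
  (∀ X ∈ S, Matrix.hadamard (1 : Matrix V V ℂ) X ∈ S) ∧
  (∀ X ∈ S, Matrix.hadamard A X ∈ S)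

/-- The partially coherent algebra of a graph: the smallest partially coherent
algebra containing the adjacency matrix. -/
noncomputable def pcAlgebra {V : Type*} [Fintype V] [DecidableEq V] (A : Matrix V V ℂ) :
    Submodule ℂ (Matrix V V ℂ) :=
  sInf {S | IsPartiallyCoherent A S}

open Polynomial in
theorem aux_allOnes_real {V : Type*} [Fintype V] [DecidableEq V]
    (G : SimpleGraph V) [DecidableRel G.Adj]
    (hconn : G.Connected) (hw : WalkRegular G) :
    ∃ p : Polynomial ℝ, aeval (G.adjMatrix ℝ) p = Matrix.of fun _ _ => (1 : ℝ) := by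
  obtain ⟨d, hd⟩ := hw 2
  have hdeg : ∀ v, (G.degree v : ℝ) = d := by
    intro v
    have := congrFun (congrFun hd v) v
    rw [pow_two, Matrix.hadamard_apply, SimpleGraph.adjMatrix_mul_self_apply_self] at this
    simpa using this
  have hlap : G.lapMatrix ℝ = algebraMap ℝ _ d - G.adjMatrix ℝ := by
    unfold SimpleGraph.lapMatrix SimpleGraph.degMatrix
    congr 1
    ext i j
    by_cases h : i = j
    · subst h
      simp [hdeg, Matrix.algebraMap_matrix_apply]
    · simp [h, Matrix.algebraMap_matrix_apply]
  have := hconn.nonempty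
  set A := G.adjMatrix ℝ with hA
  have hint : IsIntegral ℝ A := IsIntegral.of_finite ℝ A
  have hroot : (minpoly ℝ A).IsRoot d := by
    have h0 := G.lapMatrix_mulVec_const_eq_zero (R := ℝ)
    obtain ⟨q, hq⟩ := X_sub_C_dvd_sub_C_eval (a := d) (p := minpoly ℝ A)
    have h1 := congrArg (aeval A) (hq.trans (mul_comm _ _))
    rw [map_sub, minpoly.aeval, map_mul, map_sub, aeval_X, aeval_C, aeval_C] at h1
    have h2 := congrArg (fun M => M *ᵥ (fun _ : V => (1 : ℝ))) h1
    have h3 : (A - algebraMap ℝ (Matrix V V ℝ) d) *ᵥ (fun _ : V => (1 : ℝ)) = 0 := by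
      rw [← neg_sub, ← hlap, Matrix.neg_mulVec, h0, neg_zero]
    simp only [← Matrix.mulVec_mulVec, h3, Matrix.mulVec_zero] at h2
    have h4 := congrFun h2 (Classical.arbitrary V)
    rw [zero_sub] at h4
    simpa [Matrix.neg_mulVec, Algebra.algebraMap_eq_smul_one, Matrix.smul_mulVec] using h4
  obtain ⟨q, hq⟩ := dvd_iff_isRoot.mpr hroot
  have hqmon : q.Monic := (monic_X_sub_C d).of_mul_monic_left (hq ▸ minpoly.monic hint)
  have hdeg2 : (minpoly ℝ A).natDegree = 1 + q.natDegree := by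
    rw [hq, (monic_X_sub_C d).natDegree_mul hqmon, natDegree_X_sub_C]
  have hne : aeval A q ≠ 0 := by
    intro h0
    have := natDegree_le_natDegree (minpoly.min ℝ A hqmon h0)
    omega
  have hzero : G.lapMatrix ℝ * aeval A q = 0 := by
    have h1 := congrArg (aeval A) hq
    rw [minpoly.aeval, map_mul, map_sub, aeval_X, aeval_C] at h1
    rw [hlap, ← neg_sub, neg_mul, ← h1, neg_zero]
  have hcol : ∀ i i' j, aeval A q i j = aeval A q i' j := by
    intro i i' j
    have hx : G.lapMatrix ℝ *ᵥ (fun k => aeval A q k j) = 0 := by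
      ext k
      exact congrFun (congrFun hzero k) j
    exact (G.lapMatrix_mulVec_eq_zero_iff_forall_reachable).1 hx i i' (hconn.preconnected i i')
  have hsymm : (aeval A q)ᵀ = aeval A q := by
    rw [aeval_eq_sum_range, Matrix.transpose_sum]
    simp [Matrix.transpose_pow, hA]
  have hsy : ∀ i j, aeval A q i j = aeval A q j i := fun i j =>
    (congrFun (congrFun hsymm j) i)
  let v := Classical.arbitrary V
  have hall : ∀ i j, aeval A q i j = aeval A q v v := fun i j => by
    rw [hcol i v j, hsy, hcol j v v]
  have hc : aeval A q v v ≠ 0 := by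
    intro h
    apply hne
    ext i j
    rw [hall, h]; rfl
  refine ⟨C (aeval A q v v)⁻¹ * q, ?_⟩
  rw [map_mul, aeval_C]
  ext i j
  rw [← Algebra.smul_def, Matrix.smul_apply, hall i j, smul_eq_mul, inv_mul_cancel₀ hc]
  rfl

theorem aux_map_adj {V : Type*} [Fintype V] [DecidableEq V]
    (G : SimpleGraph V) [DecidableRel G.Adj] :
    (Complex.ofRealHom.mapMatrix (G.adjMatrix ℝ)) = G.adjMatrix ℂ := by
  ext i j
  by_cases h : G.Adj i j <;> simp [h]

theorem aux_hadamard_pow {V : Type*} [Fintype V] [DecidableEq V]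
    (G : SimpleGraph V) [DecidableRel G.Adj] (B : Matrix V V ℝ) (l : ℕ) (b : ℝ)
    (h : Matrix.hadamard B ((G.adjMatrix ℝ) ^ l) = b • B) :
    Matrix.hadamard (Complex.ofRealHom.mapMatrix B) ((G.adjMatrix ℂ) ^ l) =
      (b : ℂ) • Complex.ofRealHom.mapMatrix B := by
  rw [← aux_map_adj, ← map_pow]
  ext i j
  have := congrArg (Complex.ofReal) (congrFun (congrFun h i) j)
  simpa using this

theorem aux_hadamard_aeval {V : Type*} [Fintype V] [DecidableEq V]
    (A B : Matrix V V ℂ) (h : ∀ l : ℕ, ∃ b : ℂ, Matrix.hadamard B (A ^ l) = b • B)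
    (p : Polynomial ℂ) : ∃ b : ℂ, Matrix.hadamard B (Polynomial.aeval A p) = b • B := by
  induction p using Polynomial.induction_on' with
  | add p q hp hq =>
    obtain ⟨a, ha⟩ := hp
    obtain ⟨b, hb⟩ := hq
    exact ⟨a + b, by rw [map_add, Matrix.hadamard_add, ha, hb, add_smul]⟩
  | monomial n c =>
    obtain ⟨b, hb⟩ := h n
    exact ⟨c * b, by
      rw [Polynomial.aeval_monomial, ← Algebra.smul_def, Matrix.hadamard_smul, hb, mul_smul]⟩

open Polynomial in
theorem aux_range {V : Type*} [Fintype V] [DecidableEq V]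
    (G : SimpleGraph V) [DecidableRel G.Adj]
    (hconn : G.Connected) (h1wr : OneWalkRegular G) :
    IsPartiallyCoherent (G.adjMatrix ℂ)
      (LinearMap.range (aeval (R := ℂ) (G.adjMatrix ℂ)).toLinearMap) := by
  refine ⟨⟨1, by simp⟩, ⟨X, by simp⟩, ?_, ?_, ?_, ?_, ?_⟩
  · obtain ⟨p, hp⟩ := aux_allOnes_real G hconn h1wr.1
    refine ⟨p.map Complex.ofRealHom, ?_⟩
    have h := congrArg (Complex.ofRealHom.mapMatrix (m := V)) hp
    rw [aeval_eq_sum_range, map_sum] at h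
    have h2 : allOnes V = Complex.ofRealHom.mapMatrix (Matrix.of fun _ _ => (1 : ℝ)) := by
      ext i j
      simp [allOnes]
    rw [h2, ← h, AlgHom.toLinearMap_apply, aeval_eq_sum_range, natDegree_map]
    refine Finset.sum_congr rfl fun i _ => ?_
    rw [coeff_map, ← aux_map_adj, ← map_pow]
    ext a b
    simp
  · rintro _ ⟨p, rfl⟩ _ ⟨q, rfl⟩
    exact ⟨p * q, by simp⟩
  · rintro _ ⟨p, rfl⟩
    refine ⟨p.map (starRingEnd ℂ), ?_⟩
    have hA : (G.adjMatrix ℂ)ᴴ = G.adjMatrix ℂ := G.isHermitian_adjMatrix (R := ℂ)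
    rw [AlgHom.toLinearMap_apply, AlgHom.toLinearMap_apply, aeval_eq_sum_range,
      aeval_eq_sum_range, Matrix.conjTranspose_sum,
      natDegree_map]
    refine Finset.sum_congr rfl fun i _ => ?_
    rw [Matrix.conjTranspose_smul, Matrix.conjTranspose_pow, hA, coeff_map]
    rfl
  · rintro _ ⟨p, rfl⟩
    obtain ⟨b, hb⟩ := aux_hadamard_aeval (G.adjMatrix ℂ) 1 (fun l => by
      obtain ⟨a, ha⟩ := h1wr.1 l
      have := aux_hadamard_pow G 1 l a ha
      rw [map_one] at this
      exact ⟨a, this⟩) p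
    exact ⟨C b, by
      rw [AlgHom.toLinearMap_apply, AlgHom.toLinearMap_apply, hb, aeval_C,
        Algebra.algebraMap_eq_smul_one]⟩
  · rintro _ ⟨p, rfl⟩
    obtain ⟨b, hb⟩ := aux_hadamard_aeval (G.adjMatrix ℂ) (G.adjMatrix ℂ) (fun l => by
      obtain ⟨a, ha⟩ := h1wr.2 l
      have := aux_hadamard_pow G _ l a ha
      rw [aux_map_adj] at this
      exact ⟨a, this⟩) p
    exact ⟨C b * X, by
      rw [AlgHom.toLinearMap_apply, AlgHom.toLinearMap_apply, hb, map_mul, aeval_C, aeval_X,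
        ← Algebra.smul_def]⟩

/-- For a connected 1-walk-regular graph, the partially coherent algebra equals the
adjacency algebra (polynomials in the adjacency matrix). -/
theorem pcAlgebra_eq_adjacencyAlgebra_of_oneWalkRegular {V : Type*}
    [Fintype V] [DecidableEq V]
    (G : SimpleGraph V) [DecidableRel G.Adj]
    (hconn : G.Connected) (h1wr : OneWalkRegular G) :
    (pcAlgebra (G.adjMatrix ℂ) : Set (Matrix V V ℂ)) =
      {X | ∃ p : Polynomial ℂ, X = Polynomial.aeval (G.adjMatrix ℂ) p} := by
  ext M
  constructor
  · intro hM
    have := (Submodule.mem_sInf.1 hM) _ (aux_range G hconn h1wr)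
    obtain ⟨p, hp⟩ := this
    exact ⟨p, hp.symm⟩
  · rintro ⟨p, rfl⟩
    refine Submodule.mem_sInf.2 fun S hS => ?_
    obtain ⟨h1, hA, -, hmul, -⟩ := hS
    rw [Polynomial.aeval_eq_sum_range]
    refine Submodule.sum_mem _ fun i hi => Submodule.smul_mem _ _ ?_
    clear hi
    induction i with
    | zero => simpa using h1
    | succ n ih => rw [pow_succ]; exact hmul _ ih _ hA
end

section
/- Let Φ: ℂ^{n×n} → ℂ^{n×n} be given by Φ(Z) = Σ_{i=1}^m K_i Z K_i† for matrices K_1, …, K_m ∈ ℂ^{n×n} satisfying Σ_i K_i K_i† = I (Φ is unital) and Σ_i K_i† K_i = I (Φ is trace-preserving), and let Φ†(Z) = Σ_{i=1}^m K_i† Z K_i denote its adjoint. If X, Y ∈ ℂ^{n×n} satisfy Φ(X) = Y and Φ†(Y) = X, then Φ(XW) = Φ(X)Φ(W) and Φ(WX) = Φ(W)Φ(X) for every matrix W ∈ ℂ^{n×n}. -/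
open Matrix BigOperators

/-- The completely positive map with Kraus operators `K i`. -/
noncomputable def krausMap {n : Type*} [Fintype n] {m : ℕ} (K : Fin m → Matrix n n ℂ)
    (Z : Matrix n n ℂ) : Matrix n n ℂ :=
  ∑ i, K i * Z * (K i)ᴴ

/-- The adjoint (with respect to the trace inner product) of the Kraus map. -/
noncomputable def krausMapAdj {n : Type*} [Fintype n] {m : ℕ} (K : Fin m → Matrix n n ℂ)
    (Z : Matrix n n ℂ) : Matrix n n ℂ :=
  ∑ i, (K i)ᴴ * Z * K i

open scoped ComplexOrder in
lemma kraus_comm_aux {n : Type*} [Fintype n] [DecidableEq n] {m : ℕ}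
    (K : Fin m → Matrix n n ℂ)
    (hunital : ∑ i, K i * (K i)ᴴ = 1)
    (htp : ∑ i, (K i)ᴴ * K i = 1)
    (X Y : Matrix n n ℂ)
    (hXY : ∑ i, K i * X * (K i)ᴴ = Y) (hYX : ∑ i, (K i)ᴴ * Y * K i = X) :
    ∀ i, K i * X = Y * K i := by
  have hYX' : ∑ i, (K i)ᴴ * Yᴴ * K i = Xᴴ := by
    rw [← hYX, conjTranspose_sum]
    simp [conjTranspose_mul, Matrix.mul_assoc]
  have h1 : ∑ i, (K i * X - Y * K i)ᴴ * (K i * X - Y * K i)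
      = Xᴴ * (∑ i, (K i)ᴴ * K i) * X - Xᴴ * (∑ i, (K i)ᴴ * Y * K i)
        - (∑ i, (K i)ᴴ * Yᴴ * K i) * X + ∑ i, (K i)ᴴ * (Yᴴ * Y * K i) := by
    simp only [Finset.mul_sum, Finset.sum_mul, ← Finset.sum_sub_distrib,
      ← Finset.sum_add_distrib]
    refine Finset.sum_congr rfl fun i _ => ?_
    simp only [conjTranspose_sub, conjTranspose_mul]
    noncomm_ring
  have h2 : (∑ i, (K i)ᴴ * (Yᴴ * Y * K i)).trace = (Yᴴ * Y).trace := by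
    rw [trace_sum]
    simp_rw [fun i => Matrix.trace_mul_comm (K i)ᴴ (Yᴴ * Y * K i), Matrix.mul_assoc _ (K _) _]
    rw [← trace_sum, ← Finset.mul_sum, hunital, Matrix.mul_one]
  have h3 : (Yᴴ * Y).trace = (Xᴴ * X).trace := by
    rw [← hYX', Finset.sum_mul, trace_sum]
    have h : (Yᴴ * Y).trace = (Yᴴ * ∑ i, K i * X * (K i)ᴴ).trace := by rw [hXY]
    rw [h, Finset.mul_sum, trace_sum]
    refine Finset.sum_congr rfl fun i _ => ?_
    rw [← Matrix.mul_assoc, Matrix.trace_mul_comm]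
    simp only [Matrix.mul_assoc]
  have h4 : ∑ i, ((K i * X - Y * K i)ᴴ * (K i * X - Y * K i)).trace = 0 := by
    rw [← trace_sum, h1, trace_add, h2, h3, htp, hYX, hYX']
    simp
  intro i
  have h5 := (Finset.sum_eq_zero_iff_of_nonneg (fun i _ =>
    (posSemidef_conjTranspose_mul_self (K i * X - Y * K i)).trace_nonneg)).1 h4 i
      (Finset.mem_univ i)
  exact sub_eq_zero.1 (trace_conjTranspose_mul_self_eq_zero_iff.1 h5)

/-- For a unital trace-preserving completely positive map `Φ` with `Φ(X) = Y` and
`Φ†(Y) = X`, we have `Φ(XW) = Φ(X)Φ(W)` and `Φ(WX) = Φ(W)Φ(X)` for every `W`. -/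
theorem krausMap_mul {n : Type*} [Fintype n] [DecidableEq n] {m : ℕ}
    (K : Fin m → Matrix n n ℂ)
    (hunital : ∑ i, K i * (K i)ᴴ = 1)
    (htp : ∑ i, (K i)ᴴ * K i = 1)
    (X Y : Matrix n n ℂ)
    (hXY : krausMap K X = Y) (hYX : krausMapAdj K Y = X) :
    ∀ W : Matrix n n ℂ,
      krausMap K (X * W) = krausMap K X * krausMap K W ∧
      krausMap K (W * X) = krausMap K W * krausMap K X := by
  have hXY' : ∑ i, K i * X * (K i)ᴴ = Y := hXY
  have hYX' : ∑ i, (K i)ᴴ * Y * K i = X := hYX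
  have hc := kraus_comm_aux K hunital htp X Y hXY' hYX'
  have hd := kraus_comm_aux K hunital htp Xᴴ Yᴴ
    (by rw [← hXY', conjTranspose_sum]; simp [conjTranspose_mul, Matrix.mul_assoc])
    (by rw [← hYX', conjTranspose_sum]; simp [conjTranspose_mul, Matrix.mul_assoc])
  have he : ∀ i, X * (K i)ᴴ = (K i)ᴴ * Y := fun i => by
    simpa [conjTranspose_mul] using congrArg conjTranspose (hd i)
  intro W
  rw [hXY]
  unfold krausMap
  rw [Finset.mul_sum, Finset.sum_mul]
  constructor
  · refine Finset.sum_congr rfl fun i _ => ?_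
    rw [← Matrix.mul_assoc, hc i]
    simp only [Matrix.mul_assoc]
  · refine Finset.sum_congr rfl fun i _ => ?_
    simp only [Matrix.mul_assoc, he i]
end
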